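/- arXiv:2410.23434 — 5 statements merged into one kernel-verified Lean document; each statement's English description precedes it below -/
import Mathlib

section
/- Let a finite discounted MDP with state space S = Fin n_S, action space A = Fin n_A, transition probabilities P, reward r bounded by Rmax, and discount γ ∈ [0,1) be given. Let π : S → A be a deterministic policy, let ε ≥ 0, and let Q̂ : S × A → ℝ satisfy |Q̂(s,a) − Q^π(s,a)| ≤ ε for all (s,a). Let π' : S → A be greedy with respect to Q̂, i.e. for every s, Q̂(s, π'(s)) = max_{a ∈ A} Q̂(s,a). Then for every state s: V^π(s) ≤ (T* V^π)(s) ≤ V^{π'}(s) + 2ε/(1−γ). -/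
open Finset in
/-- Approximate greedy policy improvement: if `π'` is greedy w.r.t. an `ε`-accurate
estimate `Qhat` of `Q^π`, then `V^π ≤ T* V^π ≤ V^{π'} + 2ε/(1-γ)` pointwise. -/
theorem approx_policy_improvement
    (nS nA : ℕ) [NeZero nS] [NeZero nA]
    (P : Fin nS → Fin nA → Fin nS → ℝ)
    (hPnonneg : ∀ s a s', 0 ≤ P s a s')
    (hPsum : ∀ s a, ∑ s', P s a s' = 1)
    (r : Fin nS → Fin nA → ℝ) (Rmax : ℝ) (hRmax : 0 < Rmax)
    (hr : ∀ s a, |r s a| ≤ Rmax)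
    (γ : ℝ) (hγ0 : 0 ≤ γ) (hγ1 : γ < 1)
    (π π' : Fin nS → Fin nA)
    (Vπ Vπ' : Fin nS → ℝ)
    (hVπ : ∀ s, Vπ s = r s (π s) + γ * ∑ s', P s (π s) s' * Vπ s')
    (hVπ' : ∀ s, Vπ' s = r s (π' s) + γ * ∑ s', P s (π' s) s' * Vπ' s')
    (Qπ : Fin nS → Fin nA → ℝ)
    (hQπ : ∀ s a, Qπ s a = r s a + γ * ∑ s', P s a s' * Vπ s')
    (ε : ℝ) (hε : 0 ≤ ε)
    (Qhat : Fin nS → Fin nA → ℝ)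
    (hQhat : ∀ s a, |Qhat s a - Qπ s a| ≤ ε)
    (hgreedy : ∀ s, Qhat s (π' s) = univ.sup' univ_nonempty (fun a => Qhat s a)) :
    ∀ s, Vπ s ≤ univ.sup' univ_nonempty
            (fun a => r s a + γ * ∑ s', P s a s' * Vπ s') ∧
         univ.sup' univ_nonempty (fun a => r s a + γ * ∑ s', P s a s' * Vπ s')
            ≤ Vπ' s + 2 * ε / (1 - γ) := by
  have h1 : ∀ s, Vπ s ≤ univ.sup' univ_nonempty
      (fun a => r s a + γ * ∑ s', P s a s' * Vπ s') := by
    intro s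
    rw [hVπ s]
    exact Finset.le_sup' (fun a => r s a + γ * ∑ s', P s a s' * Vπ s') (mem_univ (π s))
  have h2 : ∀ s, univ.sup' univ_nonempty
      (fun a => r s a + γ * ∑ s', P s a s' * Vπ s') ≤ Qπ s (π' s) + 2 * ε := by
    intro s
    refine Finset.sup'_le _ _ fun a _ => ?_
    rw [← hQπ s a]
    have ha := abs_le.mp (hQhat s a)
    have hb := abs_le.mp (hQhat s (π' s))
    have hc : Qhat s a ≤ Qhat s (π' s) := by
      rw [hgreedy s]
      exact Finset.le_sup' (fun a => Qhat s a) (mem_univ a)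
    linarith [ha.1, hb.2]
  obtain ⟨s0, -, hs0⟩ := Finset.exists_max_image univ (fun s => Vπ s - Vπ' s) univ_nonempty
  have h3 : ∀ s, Qπ s (π' s) - Vπ' s ≤ γ * (Vπ s0 - Vπ' s0) := by
    intro s
    have e : Qπ s (π' s) - Vπ' s = γ * ∑ s', P s (π' s) s' * (Vπ s' - Vπ' s') := by
      rw [hQπ, hVπ' s]
      simp only [mul_sub, Finset.sum_sub_distrib]
      ring
    rw [e]
    refine mul_le_mul_of_nonneg_left ?_ hγ0
    calc ∑ s', P s (π' s) s' * (Vπ s' - Vπ' s')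
        ≤ ∑ s', P s (π' s) s' * (Vπ s0 - Vπ' s0) :=
          Finset.sum_le_sum fun x _ =>
            mul_le_mul_of_nonneg_left (hs0 x (mem_univ x)) (hPnonneg _ _ _)
      _ = Vπ s0 - Vπ' s0 := by rw [← Finset.sum_mul, hPsum, one_mul]
  have hpos : 0 < 1 - γ := by linarith
  have h4 : Vπ s0 - Vπ' s0 ≤ 2 * ε / (1 - γ) := by
    rw [le_div_iff₀ hpos]
    linarith [h1 s0, h2 s0, h3 s0]
  have h5 : 2 * ε + γ * (2 * ε / (1 - γ)) = 2 * ε / (1 - γ) := by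
    field_simp
    ring
  intro s
  refine ⟨h1 s, ?_⟩
  linarith [h2 s, h3 s, mul_le_mul_of_nonneg_left h4 hγ0]
end

section
/- Let a finite discounted MDP with state space S = Fin n_S, action space A = Fin n_A, transition probabilities P, reward r bounded by Rmax, discount γ ∈ [0,1), and optimal value function V* be given. Let ε ≥ 0 and let (π^{(t)})_{t ≥ 1} be a sequence of deterministic policies such that for every t there is a function Q̂^{(t)} : S × A → ℝ with max_{s,a} |Q̂^{(t)}(s,a) − Q^{π^{(t)}}(s,a)| ≤ ε and π^{(t+1)}(s) maximizes a ↦ Q̂^{(t)}(s,a) for every s. Then for all t ≥ 1: max_s |V*(s) − V^{π^{(t+1)}}(s)| ≤ γ^t · max_s |V*(s) − V^{π^{(1)}}(s)| + 2ε/(1−γ)². -/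
lemma api_avg {n : ℕ} (p x : Fin n → ℝ) (hp : ∀ i, 0 ≤ p i) (h1 : ∑ i, p i = 1)
    (M : ℝ) (hx : ∀ i, x i ≤ M) : ∑ i, p i * x i ≤ M := by
  calc ∑ i, p i * x i ≤ ∑ i, p i * M :=
        Finset.sum_le_sum fun i _ => mul_le_mul_of_nonneg_left (hx i) (hp i)
    _ = M := by rw [← Finset.sum_mul, h1, one_mul]

lemma api_avg_diff {n : ℕ} (p x y : Fin n → ℝ) (hp : ∀ i, 0 ≤ p i) (h1 : ∑ i, p i = 1)
    (M : ℝ) (hx : ∀ i, x i - y i ≤ M) : ∑ i, p i * x i - ∑ i, p i * y i ≤ M := by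
  have h := api_avg p (fun i => x i - y i) hp h1 M hx
  simpa only [mul_sub, Finset.sum_sub_distrib] using h

lemma api_contract {n : ℕ} (p : Fin n → Fin n → ℝ) (hp : ∀ s i, 0 ≤ p s i)
    (h1 : ∀ s, ∑ i, p s i = 1) (γ : ℝ) (hγ0 : 0 ≤ γ) (hγ1 : γ < 1) (x y : Fin n → ℝ) (b : ℝ)
    (h : ∀ s, x s - y s ≤ γ * (∑ i, p s i * x i - ∑ i, p s i * y i) + b) (s : Fin n) :
    x s - y s ≤ b / (1 - γ) := by
  obtain ⟨m, -, hm⟩ := Finset.exists_max_image Finset.univ (fun s => x s - y s) ⟨s, Finset.mem_univ s⟩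
  have ha := api_avg_diff (p m) x y (hp m) (h1 m) (x m - y m) (fun i => hm i (Finset.mem_univ i))
  have hb := mul_le_mul_of_nonneg_left ha hγ0
  have hc := h m
  refine (hm s (Finset.mem_univ s)).trans ?_
  rw [le_div_iff₀ (by linarith)]
  linarith

open Finset in
/-- Error bound for approximate policy iteration: if each policy `π^{(t+1)}` is greedy
with respect to an `ε`-accurate estimate of `Q^{π^{(t)}}`, then
`max_s |V*(s) − V^{π^{(t+1)}}(s)| ≤ γ^t max_s |V*(s) − V^{π^{(1)}}(s)| + 2ε/(1−γ)²`. -/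
theorem approx_policy_iteration_error
    (nS nA : ℕ) [NeZero nS] [NeZero nA]
    (P : Fin nS → Fin nA → Fin nS → ℝ)
    (hPnonneg : ∀ s a s', 0 ≤ P s a s')
    (hPsum : ∀ s a, ∑ s', P s a s' = 1)
    (r : Fin nS → Fin nA → ℝ) (Rmax : ℝ) (hRmax : 0 < Rmax)
    (hr : ∀ s a, |r s a| ≤ Rmax)
    (γ : ℝ) (hγ0 : 0 ≤ γ) (hγ1 : γ < 1)
    (Vstar : Fin nS → ℝ)
    (hVstar : ∀ s, Vstar s =
      univ.sup' univ_nonempty (fun a => r s a + γ * ∑ s', P s a s' * Vstar s'))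
    (π : ℕ → Fin nS → Fin nA)
    (V : ℕ → Fin nS → ℝ)
    (hV : ∀ t, 1 ≤ t → ∀ s,
      V t s = r s (π t s) + γ * ∑ s', P s (π t s) s' * V t s')
    (Q : ℕ → Fin nS → Fin nA → ℝ)
    (hQ : ∀ t, 1 ≤ t → ∀ s a,
      Q t s a = r s a + γ * ∑ s', P s a s' * V t s')
    (ε : ℝ) (hε : 0 ≤ ε)
    (Qhat : ℕ → Fin nS → Fin nA → ℝ)
    (hQhat : ∀ t, 1 ≤ t → ∀ s a, |Qhat t s a - Q t s a| ≤ ε)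
    (hgreedy : ∀ t, 1 ≤ t → ∀ s,
      Qhat t s (π (t + 1) s) = univ.sup' univ_nonempty (fun a => Qhat t s a)) :
    ∀ t, 1 ≤ t →
      univ.sup' univ_nonempty (fun s => |Vstar s - V (t + 1) s|) ≤
        γ ^ t * univ.sup' univ_nonempty (fun s => |Vstar s - V 1 s|)
          + 2 * ε / (1 - γ) ^ 2 := by
  have hg : 0 < 1 - γ := by linarith
  have hopt : ∀ s a, r s a + γ * ∑ s', P s a s' * Vstar s' ≤ Vstar s := by
    intro s a
    rw [hVstar s]
    exact le_sup' (fun a => r s a + γ * ∑ s', P s a s' * Vstar s') (mem_univ a)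
  have hup : ∀ t, 1 ≤ t → ∀ s, V t s ≤ Vstar s := by
    intro t ht s
    have := api_contract (fun s => P s (π t s)) (fun s => hPnonneg s _) (fun s => hPsum s _)
      γ hγ0 hγ1 (V t) Vstar 0 (fun s => by
        have h1 := hV t ht s
        have h2 := hopt s (π t s)
        linarith) s
    rw [zero_div] at this
    linarith
  have hgr : ∀ t, 1 ≤ t → ∀ s a, Q t s a ≤ Q t s (π (t + 1) s) + 2 * ε := by
    intro t ht s a
    have h1 := abs_le.1 (hQhat t ht s a)
    have h2 := abs_le.1 (hQhat t ht s (π (t + 1) s))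
    have h3 := le_sup' (fun a => Qhat t s a) (mem_univ a)
    have h4 := hgreedy t ht s
    linarith [h1.1, h2.2]
  have hmono : ∀ t, 1 ≤ t → ∀ s, V t s - V (t + 1) s ≤ 2 * ε / (1 - γ) := by
    intro t ht
    refine api_contract (fun s => P s (π (t + 1) s)) (fun s => hPnonneg s _)
      (fun s => hPsum s _) γ hγ0 hγ1 (V t) (V (t + 1)) (2 * ε) (fun s => ?_)
    have h1 := hV t ht s
    have h2 := hV (t + 1) (by omega) s
    have h3 := hgr t ht s (π t s)
    rw [hQ t ht, hQ t ht] at h3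
    linarith
  have hstep : ∀ t, 1 ≤ t → ∀ M, (∀ s, Vstar s - V t s ≤ M) →
      ∀ s, Vstar s - V (t + 1) s ≤ γ * M + 2 * ε / (1 - γ) := by
    intro t ht M hM s
    obtain ⟨a, -, ha⟩ := exists_mem_eq_sup' (univ_nonempty (α := Fin nA))
      (fun a => r s a + γ * ∑ s', P s a s' * Vstar s')
    rw [← hVstar s] at ha
    have h2 := hV (t + 1) (by omega) s
    have h3 := hgr t ht s a
    rw [hQ t ht, hQ t ht] at h3
    have h4 := mul_le_mul_of_nonneg_left
      (api_avg_diff (P s a) Vstar (V t) (hPnonneg s a) (hPsum s a) M hM) hγ0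
    have h5 := mul_le_mul_of_nonneg_left
      (api_avg_diff (P s (π (t + 1) s)) (V t) (V (t + 1)) (hPnonneg s _) (hPsum s _) _
        (hmono t ht)) hγ0
    have h6 : γ * (2 * ε / (1 - γ)) + 2 * ε = 2 * ε / (1 - γ) := by
      field_simp
      ring
    linarith
  have hmain : ∀ t s, Vstar s - V (t + 1) s ≤
      γ ^ t * univ.sup' univ_nonempty (fun s => |Vstar s - V 1 s|) + 2 * ε / (1 - γ) ^ 2 := by
    intro t
    induction t with
    | zero =>
      intro s
      have h1 := le_sup' (fun s => |Vstar s - V 1 s|) (mem_univ s)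
      have h2 := le_abs_self (Vstar s - V 1 s)
      have h3 : 0 ≤ 2 * ε / (1 - γ) ^ 2 := by positivity
      simp only [zero_add, pow_zero, one_mul] at *
      linarith
    | succ t ih =>
      intro s
      have h := hstep (t + 1) (by omega) _ ih s
      refine h.trans (le_of_eq ?_)
      have h6 : γ * (2 * ε / (1 - γ) ^ 2) + 2 * ε / (1 - γ) = 2 * ε / (1 - γ) ^ 2 := by
        field_simp
        ring
      rw [pow_succ γ t, mul_add, add_assoc, h6]
      ring
  intro t ht
  refine sup'_le _ _ fun s _ => ?_
  rw [abs_of_nonneg (by linarith [hup (t + 1) (by omega) s])]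
  exact hmain t s
end

section
/- Let n ≥ 1, γ ∈ [0,1), and let T : (Fin n → ℝ) → (Fin n → ℝ) be an operator that is monotone (f ≤ g pointwise implies T f ≤ T g pointwise) and satisfies T(f + c·1) ≤ T f + γ c · 1 pointwise for every f and every constant c ≥ 0, where 1 denotes the all-ones function. Let V* satisfy T V* = V*. If V : Fin n → ℝ and ε ≥ 0 satisfy V ≤ T V + ε·1 pointwise, then V ≤ V* + (ε/(1−γ))·1 pointwise. -/
/-- Abstract approximate-improvement lemma: for a monotone operator `T` with the
`γ`-discounted constant-shift property and fixed point `V*`, any `V` with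
`V ≤ T V + ε·1` satisfies `V ≤ V* + (ε/(1−γ))·1`. -/
theorem approx_fixed_point_bound
    (n : ℕ) (hn : 1 ≤ n)
    (γ : ℝ) (hγ0 : 0 ≤ γ) (hγ1 : γ < 1)
    (T : (Fin n → ℝ) → (Fin n → ℝ))
    (hmono : ∀ f g : Fin n → ℝ, (∀ s, f s ≤ g s) → ∀ s, T f s ≤ T g s)
    (hshift : ∀ (f : Fin n → ℝ) (c : ℝ), 0 ≤ c →
      ∀ s, T (fun x => f x + c) s ≤ T f s + γ * c)
    (Vstar : Fin n → ℝ) (hfix : T Vstar = Vstar)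
    (V : Fin n → ℝ) (ε : ℝ) (hε : 0 ≤ ε)
    (hV : ∀ s, V s ≤ T V s + ε) :
    ∀ s, V s ≤ Vstar s + ε / (1 - γ) := by
  have h1 : 0 < 1 - γ := by linarith
  have : Nonempty (Fin n) := ⟨⟨0, by omega⟩⟩
  obtain ⟨s0, hs0⟩ := Finite.exists_max (fun s => V s - Vstar s)
  intro s
  have hs := hs0 s
  have hq : 0 ≤ ε / (1 - γ) := div_nonneg hε h1.le
  by_cases hm : 0 ≤ V s0 - Vstar s0
  · have a := hmono V (fun x => Vstar x + (V s0 - Vstar s0))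
      (fun x => by have := hs0 x; linarith) s0
    have b := hshift Vstar _ hm s0
    rw [hfix] at b
    have c := hV s0
    have d : V s0 - Vstar s0 ≤ ε / (1 - γ) := by
      rw [le_div_iff₀ h1]
      linarith
    linarith
  · linarith
end

section
/- Let S, A, d, K ≥ 1, let U be a real S × d matrix and W a real A × d matrix with orthonormal columns (Uᵀ U = I_d, Wᵀ W = I_d), let Σ be an invertible diagonal d × d real matrix, and set Q := U Σ Wᵀ. Let ι : Fin K → Fin S and ȷ : Fin K → Fin A be injective, and let L and R be diagonal K × K matrices with positive diagonal entries. Define D_U := L · U(ι(·),:) and D_W := R · W(ȷ(·),:), and assume D_Uᵀ D_U and D_Wᵀ D_W are invertible (D_U and D_W have rank d). Let N := D_W (D_Wᵀ D_W)^{-1} Σ^{-1} (D_Uᵀ D_U)^{-1} D_Uᵀ, which is the Moore–Penrose pseudoinverse of L Q(ι(·), ȷ(·)) R. Then for every (s,a) ∈ Fin S × Fin A: Q(s,a) = Σ_{u,v ∈ Fin K} Q(s, ȷ(u)) · R(u,u) · N(u,v) · L(v,v) · Q(ι(v), a). -/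
open Matrix

/-- Exact CUR-type recovery of a rank-`d` matrix `Q = U Σ Wᵀ` from anchor rows `ι`
and columns `jj`, with diagonal reweighting matrices `L`, `R`. -/
theorem CUR_exact_recovery
    (S A d K : ℕ) (hS : 1 ≤ S) (hA : 1 ≤ A) (hd : 1 ≤ d) (hK : 1 ≤ K)
    (U : Matrix (Fin S) (Fin d) ℝ) (W : Matrix (Fin A) (Fin d) ℝ)
    (hUorth : Uᵀ * U = 1) (hWorth : Wᵀ * W = 1)
    (σ : Fin d → ℝ) (hσ : ∀ i, σ i ≠ 0)
    (ι : Fin K → Fin S) (hι : Function.Injective ι)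
    (jj : Fin K → Fin A) (hjj : Function.Injective jj)
    (l ρ : Fin K → ℝ) (hl : ∀ k, 0 < l k) (hρ : ∀ k, 0 < ρ k)
    (Q : Matrix (Fin S) (Fin A) ℝ)
    (hQ : Q = U * Matrix.diagonal σ * Wᵀ)
    (DU DW : Matrix (Fin K) (Fin d) ℝ)
    (hDU : DU = Matrix.diagonal l * U.submatrix ι id)
    (hDW : DW = Matrix.diagonal ρ * W.submatrix jj id)
    (hDUrank : IsUnit (DUᵀ * DU)) (hDWrank : IsUnit (DWᵀ * DW))
    (N : Matrix (Fin K) (Fin K) ℝ)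
    (hN : N = DW * (DWᵀ * DW)⁻¹ * (Matrix.diagonal σ)⁻¹ * (DUᵀ * DU)⁻¹ * DUᵀ) :
    ∀ (s : Fin S) (a : Fin A),
      Q s a = ∑ u : Fin K, ∑ v : Fin K,
        Q s (jj u) * ρ u * N u v * l v * Q (ι v) a := by
  have hX : Q.submatrix id jj * Matrix.diagonal ρ = U * Matrix.diagonal σ * DWᵀ := by
    rw [hDW, Matrix.transpose_mul, Matrix.diagonal_transpose, ← Matrix.mul_assoc, hQ]
    rfl
  have hY : Matrix.diagonal l * Q.submatrix ι id = DU * Matrix.diagonal σ * Wᵀ := by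
    rw [hDU, hQ, Matrix.mul_assoc (Matrix.diagonal l), Matrix.mul_assoc (Matrix.diagonal l)]
    rfl
  have hσu : IsUnit (Matrix.diagonal σ).det := by
    rw [Matrix.det_diagonal]
    exact (Finset.prod_ne_zero_iff.mpr fun i _ => hσ i).isUnit
  have h1 := Matrix.mul_nonsing_inv _ ((Matrix.isUnit_iff_isUnit_det _).mp hDWrank)
  have h2 := Matrix.nonsing_inv_mul _ ((Matrix.isUnit_iff_isUnit_det _).mp hDUrank)
  have h3 := Matrix.mul_nonsing_inv _ hσu
  have hmain : Q = (Q.submatrix id jj * Matrix.diagonal ρ) * N *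
      (Matrix.diagonal l * Q.submatrix ι id) := by
    rw [hX, hY, hN]
    calc Q = U * Matrix.diagonal σ * Wᵀ := hQ
      _ = U * (Matrix.diagonal σ * ((DWᵀ * DW) * (DWᵀ * DW)⁻¹) * (Matrix.diagonal σ)⁻¹) *
          ((DUᵀ * DU)⁻¹ * (DUᵀ * DU)) * Matrix.diagonal σ * Wᵀ := by
        rw [h1, h2, Matrix.mul_one, Matrix.mul_one, h3, Matrix.mul_one]
      _ = _ := by simp only [Matrix.mul_assoc]
  intro s a
  have h := congrFun (congrFun hmain s) a
  rw [h, Matrix.mul_apply]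
  simp only [Matrix.mul_apply (M := Q.submatrix id jj * Matrix.diagonal ρ),
    Matrix.mul_diagonal, Matrix.diagonal_mul, Matrix.submatrix_apply, id, Finset.sum_mul]
  rw [Finset.sum_comm]
  simp only [mul_assoc]
end

section
/- Let S, d ≥ 1 with d ≤ S, and let U, Û be real S × d matrices, each with orthonormal columns (Uᵀ U = I_d and Ûᵀ Û = I_d). Define, for each s ∈ Fin S, the leverage scores ℓ_s := ‖U_{s,:}‖₂² / d, the clipped estimates ℓ̃_s := max( ‖Û_{s,:}‖₂², d/S ), and the normalized estimates ℓ̂_s := ℓ̃_s / Σ_{s'} ℓ̃_{s'}. Suppose that for every s ∈ Fin S: ‖U_{s,:} − Û_{s,:} (Ûᵀ U)‖₂ ≤ (1 − 1/√2) · max( ‖U_{s,:}‖₂, √(d/(4S)) ). Then for every s ∈ Fin S: ℓ̂_s ≥ ℓ_s / 4. -/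
open Matrix Finset


lemma lev_isom {m n : ℕ} (U : Matrix (Fin m) (Fin n) ℝ) (h : Uᵀ * U = 1) (x : Fin n → ℝ) :
    (U *ᵥ x) ⬝ᵥ (U *ᵥ x) = x ⬝ᵥ x := by
  rw [Matrix.dotProduct_mulVec, ← Matrix.mulVec_transpose, Matrix.mulVec_mulVec, h,
    Matrix.one_mulVec]

lemma lev_bessel {m n : ℕ} (U : Matrix (Fin m) (Fin n) ℝ) (h : Uᵀ * U = 1) (y : Fin m → ℝ) :
    (Uᵀ *ᵥ y) ⬝ᵥ (Uᵀ *ᵥ y) ≤ y ⬝ᵥ y := by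
  have h1 : 0 ≤ (y - U *ᵥ (Uᵀ *ᵥ y)) ⬝ᵥ (y - U *ᵥ (Uᵀ *ᵥ y)) := by
    simp only [dotProduct]
    exact Finset.sum_nonneg fun i _ => mul_self_nonneg _
  have h2 : y ⬝ᵥ (U *ᵥ (Uᵀ *ᵥ y)) = (Uᵀ *ᵥ y) ⬝ᵥ (Uᵀ *ᵥ y) := by
    rw [Matrix.dotProduct_mulVec, ← Matrix.mulVec_transpose]
  rw [sub_dotProduct, dotProduct_sub, dotProduct_sub, lev_isom U h,
    dotProduct_comm (U *ᵥ _) y, h2] at h1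
  linarith

lemma lev_contract {S d : ℕ} (U V : Matrix (Fin S) (Fin d) ℝ) (hU : Uᵀ * U = 1)
    (hV : Vᵀ * V = 1) (x : Fin d → ℝ) :
    ∑ j, (∑ k, x k * (Vᵀ * U) k j) ^ 2 ≤ ∑ j, (x j) ^ 2 := by
  have h := lev_bessel U hU (V *ᵥ x)
  rw [lev_isom V hV] at h
  have e : Uᵀ *ᵥ (V *ᵥ x) = fun j => ∑ k, x k * (Vᵀ * U) k j := by
    rw [Matrix.mulVec_mulVec, ← Matrix.transpose_transpose (Uᵀ * V), Matrix.mulVec_transpose,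
      Matrix.transpose_mul, Matrix.transpose_transpose]
    rfl
  rw [e] at h
  simpa only [dotProduct, ← sq] using h

lemma lev_triangle {d : ℕ} (a b : Fin d → ℝ) :
    Real.sqrt (∑ j, (a j) ^ 2) ≤
      Real.sqrt (∑ j, (a j - b j) ^ 2) + Real.sqrt (∑ j, (b j) ^ 2) := by
  have h := norm_le_norm_sub_add (WithLp.toLp 2 a : EuclideanSpace ℝ (Fin d)) (WithLp.toLp 2 b)
  simpa [EuclideanSpace.norm_eq] using h

/-- Deterministic leverage-score estimation guarantee: if each row of `Û` is close (up to
the rotation `Ûᵀ U`) to the corresponding row of `U` at a row-dependent scale, then the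
clipped and normalized estimated leverage scores are within a factor `4` of the true
leverage scores. -/
theorem leverage_score_estimation
    (S d : ℕ) (hS : 1 ≤ S) (hd1 : 1 ≤ d) (hdS : d ≤ S)
    (U Uhat : Matrix (Fin S) (Fin d) ℝ)
    (hUorth : Uᵀ * U = 1) (hUhatorth : Uhatᵀ * Uhat = 1)
    (hclose : ∀ s : Fin S,
      Real.sqrt (∑ j, (U s j - ∑ k, Uhat s k * (Uhatᵀ * U) k j) ^ 2) ≤
        (1 - 1 / Real.sqrt 2) *
          max (Real.sqrt (∑ j, (U s j) ^ 2)) (Real.sqrt ((d : ℝ) / (4 * S)))) :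
    ∀ s : Fin S,
      (max (∑ j, (Uhat s j) ^ 2) ((d : ℝ) / S)) /
          (∑ s' : Fin S, max (∑ j, (Uhat s' j) ^ 2) ((d : ℝ) / S)) ≥
        ((∑ j, (U s j) ^ 2) / d) / 4 := by
  intro s
  have hd : (0 : ℝ) < d := by exact_mod_cast hd1
  have hSp : (0 : ℝ) < S := by exact_mod_cast hS
  have hdSp : (0 : ℝ) < (d : ℝ) / S := by positivity
  have htot : ∑ s' : Fin S, ∑ j, (Uhat s' j) ^ 2 = d := by
    have h := congrArg Matrix.trace hUhatorth
    rw [Matrix.trace_one, Fintype.card_fin] at h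
    rw [← h, Finset.sum_comm]
    simp [Matrix.trace, Matrix.mul_apply, sq]
  have hsum : (∑ s' : Fin S, max (∑ j, (Uhat s' j) ^ 2) ((d : ℝ) / S)) ≤ 2 * d := by
    calc _ ≤ ∑ s' : Fin S, ((∑ j, (Uhat s' j) ^ 2) + (d : ℝ) / S) := by
          refine Finset.sum_le_sum fun i _ => ?_
          have : 0 ≤ ∑ j, (Uhat i j) ^ 2 := Finset.sum_nonneg fun j _ => sq_nonneg _
          exact max_le (by linarith) (by linarith)
      _ = 2 * d := by
          rw [Finset.sum_add_distrib, htot]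
          simp
          field_simp
          ring
  have hpos : 0 < (∑ s' : Fin S, max (∑ j, (Uhat s' j) ^ 2) ((d : ℝ) / S)) :=
    Finset.sum_pos (fun i _ => lt_max_of_lt_right hdSp) ⟨s, Finset.mem_univ s⟩
  have hu : 0 ≤ ∑ j, (U s j) ^ 2 := Finset.sum_nonneg fun j _ => sq_nonneg _
  have hkey : (∑ j, (U s j) ^ 2) / 2 ≤ max (∑ j, (Uhat s j) ^ 2) ((d : ℝ) / S) := by
    rcases le_total (∑ j, (U s j) ^ 2) ((d : ℝ) / (4 * S)) with hc | hc
    · apply le_max_of_le_right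
      have : (d : ℝ) / (4 * S) = (d : ℝ) / S / 4 := by field_simp
      linarith
    · apply le_max_of_le_left
      have h1 := hclose s
      rw [max_eq_left (Real.sqrt_le_sqrt hc)] at h1
      have h2 := lev_triangle (U s) (fun j => ∑ k, Uhat s k * (Uhatᵀ * U) k j)
      have h3 := Real.sqrt_le_sqrt (lev_contract U Uhat hUorth hUhatorth (Uhat s))
      have h4 : Real.sqrt (∑ j, (U s j) ^ 2) / Real.sqrt 2 ≤
          Real.sqrt (∑ j, (Uhat s j) ^ 2) := by
        rw [div_eq_mul_one_div, mul_comm]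
        linarith
      rw [← Real.sqrt_div hu] at h4
      exact (Real.sqrt_le_sqrt_iff (Finset.sum_nonneg fun j _ => sq_nonneg _)).1 h4
  rw [ge_iff_le, le_div_iff₀ hpos]
  calc _ ≤ (∑ j, (U s j) ^ 2) / d / 4 * (2 * d) := by gcongr
    _ = (∑ j, (U s j) ^ 2) / 2 := by field_simp; ring
    _ ≤ _ := hkey
end
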